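/- Let G be a finitely generated group and p a prime. Then DG_p(G) ≤ RG(G), i.e. the p-deficiency gradient of G is at most the rank gradient of G. -/

import Mathlib

/-!
Let `H` be a finite index subgroup of `G` with a presentation `⟨x₁, …, xₙ | R⟩`, let `L` be any
finite index subgroup, generated by `d` elements, and put `K = H ⊓ L`. The dimension of
`Hom(K, 𝔽_p)` is estimated twice. By Shapiro's lemma (`shapiro_finrank`),
`dim Z¹(H, Fun(H/K)) = dim Hom(K, 𝔽_p) + |H : K| - 1`, where `Fun` denotes the functions with
values in `𝔽_p`, and likewise for `L`.

* Lower bound (`coc_lower`). Cocycles of the free group on `x₁, …, xₙ` with values in `Fun(X)` form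
  a space of dimension `n |X|`, and those that vanish on `R` descend to `H`. For `r = s ^ q` with
  `q = p ^ ν_p(r)`, the value of a cocycle at `r` is the norm `1 + s + ⋯ + s ^ (q - 1)` applied to
  its value at `s`. In characteristic `p` this norm is `(s - 1) ^ (q - 1)`, and `s - 1` is nilpotent
  of exponent `q` on `Fun(X)`, so its rank is at most `|X| / q` (`norm_rank`, `relator_rank`).
  Hence `dim Z¹(H, Fun(X)) ≥ |X| (n - ∑ p ^ (-ν_p(r)))`.
* Upper bound (`coc_finrank_le`). `dim Z¹(L, Fun(L/K)) ≤ d |L : K|`.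

Together, `|H : K| (n - ∑ p ^ (-ν_p(r)) - 1) ≤ dim Hom(K, 𝔽_p) - 1 ≤ |L : K| (d - 1)`, and division
by `|G : K|` gives the inequality between the gradients. Neither normality of `H` nor `p`-power
indices play a role.
-/


open scoped Classical ENNReal

namespace ResDef

variable {G : Type*} [Group G]

/-- The order of the image of `x` in `G ⧸ H`: the least positive `j` with `x ^ j ∈ H`,
or `0` if there is no such `j`. -/
noncomputable def orderIn (H : Subgroup G) (x : G) : ℕ :=
  sInf {j : ℕ | 0 < j ∧ x ^ j ∈ H}

/-- The finite residual: the intersection of all finite index subgroups. -/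
def finiteResidual (G : Type*) [Group G] : Subgroup G :=
  ⨅ (H : Subgroup G) (_ : H.index ≠ 0), H

/-- An element of a free group is not a proper power. -/
def NotProperPower {α : Type*} (u : FreeGroup α) : Prop :=
  ∀ (v : FreeGroup α) (k : ℕ), u = v ^ k → k = 1

/-- `G` admits a finite presentation. -/
def FinitelyPresentedGroup (G : Type*) [Group G] : Prop :=
  ∃ (n : ℕ) (R : Finset (FreeGroup (Fin n))) (φ : FreeGroup (Fin n) →* G),
    Function.Surjective φ ∧ φ.ker = Subgroup.normalClosure (R : Set (FreeGroup (Fin n)))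

/-- The deficiency of a finitely presented group. -/
noncomputable def deficiency (G : Type*) [Group G] : ℝ :=
  sSup {x : ℝ | ∃ (n : ℕ) (R : Finset (FreeGroup (Fin n))) (φ : FreeGroup (Fin n) →* G),
    Function.Surjective φ ∧ φ.ker = Subgroup.normalClosure (R : Set (FreeGroup (Fin n))) ∧
    x = (n : ℝ) - (R.card : ℝ)}

/-- The residual deficiency of a finitely presented group. -/
noncomputable def rdef (G : Type*) [Group G] : ℝ :=
  sSup {x : ℝ | ∃ (n s : ℕ) (u : Fin s → FreeGroup (Fin n)) (m : Fin s → ℕ)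
    (φ : FreeGroup (Fin n) →* G),
    (∀ i, 1 ≤ m i) ∧ (∀ i, NotProperPower (u i)) ∧ Function.Surjective φ ∧
    φ.ker = Subgroup.normalClosure (Set.range fun i => u i ^ m i) ∧
    x = (n : ℝ) - ∑ i, ((orderIn (finiteResidual G) (φ (u i)) : ℝ))⁻¹}

/-- The deficiency gradient. -/
noncomputable def DG (G : Type*) [Group G] : ℝ :=
  sSup {x : ℝ | ∃ H : Subgroup G, H.index ≠ 0 ∧
    x = (deficiency H - 1) / (H.index : ℝ)}

/-- `ν_p(r)`: the largest `k` such that `r = s ^ (p ^ k)` for some `s`. -/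
noncomputable def nuP (p : ℕ) {α : Type*} (r : FreeGroup α) : ℕ :=
  sSup {k : ℕ | ∃ s : FreeGroup α, r = s ^ (p ^ k)}

/-- The `p`-deficiency of a group. -/
noncomputable def defP (p : ℕ) (G : Type*) [Group G] : ℝ :=
  sSup {x : ℝ | ∃ (n : ℕ) (R : Set (FreeGroup (Fin n))) (φ : FreeGroup (Fin n) →* G),
    Function.Surjective φ ∧ φ.ker = Subgroup.normalClosure R ∧
    Summable (fun r : R => ((p : ℝ) ^ (nuP p r.1))⁻¹) ∧
    x = (n : ℝ) - ∑' r : R, ((p : ℝ) ^ (nuP p r.1))⁻¹}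

/-- The `p`-deficiency gradient. -/
noncomputable def DGp (p : ℕ) (G : Type*) [Group G] : ℝ :=
  sSup {x : ℝ | ∃ H : Subgroup G, H.Normal ∧ H.index ≠ 0 ∧
    x = (defP p H - 1) / (H.index : ℝ)}

/-- The rank (minimal number of generators) of a group. -/
noncomputable def grpRank (G : Type*) [Group G] : ℕ :=
  sInf {n : ℕ | ∃ S : Finset G, S.card = n ∧ Subgroup.closure (S : Set G) = ⊤}

/-- The rank gradient. -/
noncomputable def RG (G : Type*) [Group G] : ℝ :=
  sInf {x : ℝ | ∃ H : Subgroup G, H.index ≠ 0 ∧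
    x = ((grpRank H : ℝ) - 1) / (H.index : ℝ)}

/-- The `p`-rank: the largest `n` such that `G` surjects onto `(C_p)^n`. -/
noncomputable def pRank (p : ℕ) (G : Type*) [Group G] : ℕ :=
  sSup {n : ℕ | ∃ f : G →* (Fin n → Multiplicative (ZMod p)), Function.Surjective f}

/-- The `p`-rank gradient. -/
noncomputable def RGp (p : ℕ) (G : Type*) [Group G] : ℝ :=
  sInf {x : ℝ | ∃ H : Subgroup G, H.Normal ∧ H.index ≠ 0 ∧
    x = ((pRank p H : ℝ) - 1) / (H.index : ℝ)}

/-- `G` is large: some finite index subgroup surjects onto a free group of rank 2. -/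
def Large (G : Type*) [Group G] : Prop :=
  ∃ H : Subgroup G, H.index ≠ 0 ∧ ∃ f : H →* FreeGroup (Fin 2), Function.Surjective f

/-- The first Betti number: the largest `n` such that `G` surjects onto `ℤ^n`. -/
noncomputable def firstBetti (G : Type*) [Group G] : ℕ :=
  sSup {n : ℕ | ∃ f : G →* Multiplicative (Fin n → ℤ), Function.Surjective f}

/-- The order of the image of `x` in `G ⧸ H`, as an extended natural number. -/
noncomputable def orderInE (H : Subgroup G) (x : G) : ℕ∞ :=
  if orderIn H x = 0 then ⊤ else (orderIn H x : ℕ∞)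

/-- `ν(g; G, K)` from the paper, valued in `ℕ∞`. -/
noncomputable def nu (K : Subgroup G) (g : G) : ℕ∞ :=
  if g ∈ K then
    sSup ((fun a : G => orderInE K a) '' {a : G | ∃ n : ℤ, a ^ n = g})
  else
    sSup ((fun q : G × ℤ => (q.2.natAbs : ℕ∞)) '' {q : G × ℤ | q.2 ≠ 0 ∧ q.1 ^ q.2 = g})

/-- The relative size `ν(g;G,K)⁻¹` of an element (`0` if `ν` is infinite). -/
noncomputable def relsizeElem (K : Subgroup G) (g : G) : ℝ :=
  (((nu K g).toNat : ℝ))⁻¹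

/-- The relative size of a finite set. -/
noncomputable def relsizeFinset (K : Subgroup G) (S : Finset G) : ℝ :=
  ∑ g ∈ S, relsizeElem K g

/-- The relative size of a normal subgroup `M`, finitely generated as a normal subgroup. -/
noncomputable def relsizeSubgroup (K M : Subgroup G) : ℝ :=
  sInf {x : ℝ | ∃ S : Finset G, Subgroup.normalClosure (S : Set G) = M ∧
    x = relsizeFinset K S}

/-- `a` is a minimal root of `g` in `G` with respect to `K`. -/
def IsMinimalRoot (K : Subgroup G) (g a : G) : Prop :=
  (g ∈ K ∧ (∃ n : ℤ, a ^ n = g) ∧ ((orderIn K a : ℕ∞) = nu K g)) ∨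
  (g ∉ K ∧ ∃ m : ℕ, (m : ℕ∞) = nu K g ∧ a ^ m = g)


open Module

/-! ### Rank of the norm operator in characteristic `p` -/

section Norm

variable {k V : Type*} [Field k] [AddCommGroup V] [Module k V] [FiniteDimensional k V]

/-- If `N ^ q = 0`, each of the `q` steps `range (N ^ j) ⊇ range (N ^ (j + 1))` drops the dimension
by at least `rank (N ^ (q - 1))`, because `range (N ^ (q - 1))` lies in `range (N ^ j) ⊓ ker N`.
Taking `j = q` gives `q * rank (N ^ (q - 1)) ≤ dim V`. -/
theorem nilpotent_rank (N : Module.End k V) (q : ℕ) (hN : N ^ q = 0) (j : ℕ) (hj : j ≤ q) :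
    finrank k (LinearMap.range (N ^ j)) + j * finrank k (LinearMap.range (N ^ (q - 1))) ≤
      finrank k V := by
  induction j with
  | zero => simpa using Submodule.finrank_le _
  | succ j ih =>
    have h1 := ih (by omega)
    -- Rank-nullity for `N` restricted to the image of `N ^ j`.
    have h2 := LinearMap.finrank_range_add_finrank_ker
      (N.comp (LinearMap.range (N ^ j)).subtype)
    have h3 : LinearMap.range (N.comp (LinearMap.range (N ^ j)).subtype) =
        LinearMap.range (N ^ (j + 1)) := by
      rw [LinearMap.range_comp, Submodule.range_subtype, pow_succ', Module.End.mul_eq_comp,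
        LinearMap.range_comp]
    have h4 : finrank k (LinearMap.range (N ^ (q - 1))) ≤
        finrank k (LinearMap.ker (N.comp (LinearMap.range (N ^ j)).subtype)) := by
      have hmem : ∀ v ∈ LinearMap.range (N ^ (q - 1)), v ∈ LinearMap.range (N ^ j) := by
        rintro _ ⟨w, rfl⟩
        refine ⟨(N ^ (q - 1 - j)) w, ?_⟩
        rw [← Module.End.mul_apply, ← pow_add]
        congr 2
        omega
      have hker : ∀ v ∈ LinearMap.range (N ^ (q - 1)), N v = 0 := by
        rintro _ ⟨w, rfl⟩
        rw [← Module.End.mul_apply, ← pow_succ', show q - 1 + 1 = q by omega, hN]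
        rfl
      refine LinearMap.finrank_le_finrank_of_injective
        (f := LinearMap.codRestrict _ (LinearMap.codRestrict (LinearMap.range (N ^ j))
          (LinearMap.range (N ^ (q - 1))).subtype fun v => hmem _ v.2) fun v => hker _ v.2) ?_
      intro v w h
      have := congrArg (fun z => (z.1.1 : V)) h
      exact Subtype.ext this
    rw [h3] at h2
    rw [add_mul, one_mul]
    omega

/-- In characteristic `p` the norm `1 + σ + ⋯ + σ ^ (q - 1)`, with `q = p ^ e` and `σ ^ q = 1`,
equals `(σ - 1) ^ (q - 1)`, where `σ - 1` is nilpotent of exponent `q`; so its rank is at most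
`dim V / q`. -/
theorem norm_rank (p : ℕ) [Fact p.Prime] [CharP k p] (e : ℕ) (σ : Module.End k V)
    (hσ : σ ^ (p ^ e) = 1) :
    p ^ e * finrank k (LinearMap.range (∑ i ∈ Finset.range (p ^ e), σ ^ i)) ≤ finrank k V := by
  have hq : 0 < p ^ e := pow_pos (Fact.out : p.Prime).pos _
  have hpoly : (∑ i ∈ Finset.range (p ^ e), (Polynomial.X : Polynomial k) ^ i) =
      (Polynomial.X - 1) ^ (p ^ e - 1) := by
    have hX : (Polynomial.X - 1 : Polynomial k) ≠ 0 := by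
      simpa using Polynomial.X_sub_C_ne_zero (1 : k)
    apply mul_right_cancel₀ hX
    rw [geom_sum_mul, ← pow_succ, Nat.sub_add_cancel hq, sub_pow_char_pow, one_pow]
  have hsum : (∑ i ∈ Finset.range (p ^ e), σ ^ i) = (σ - 1) ^ (p ^ e - 1) := by
    simpa using congrArg (Polynomial.aeval σ) hpoly
  have hpoly2 : (Polynomial.X - 1 : Polynomial k) ^ (p ^ e) = Polynomial.X ^ (p ^ e) - 1 := by
    rw [sub_pow_char_pow, one_pow]
  have hN : (σ - 1) ^ (p ^ e) = 0 := by
    have := congrArg (Polynomial.aeval σ) hpoly2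
    simpa [hσ] using this
  have := nilpotent_rank (σ - 1) (p ^ e) hN (p ^ e) le_rfl
  rw [hsum]
  exact le_trans (Nat.le_add_left _ _) this

end Norm

/-! ### Cocycles with values in functions on a finite set -/

section Cocycles

variable (p : ℕ) {Γ X : Type*} [Group Γ]

/-- The `ZMod p`-space of `1`-cocycles of `Γ` with coefficients in the functions on the
`Γ`-set `X`, the action being given by `ρ`. A cocycle is written as a function of two variables,
that is, as a homomorphism from the action groupoid of `X` to `ZMod p`. -/
def Coc (ρ : Γ →* Equiv.Perm X) : Submodule (ZMod p) (Γ → X → ZMod p) where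
  carrier := {c | ∀ g h x, c (g * h) x = c g (ρ h x) + c h x}
  zero_mem' := by intro g h x; simp
  add_mem' := by
    intro a b ha hb g h x
    simp only [Pi.add_apply, ha g h x, hb g h x]
    ring
  smul_mem' := by
    intro t a ha g h x
    simp only [Pi.smul_apply, ha g h x, smul_add]

variable {p} {ρ : Γ →* Equiv.Perm X}

theorem coc_mul (c : Coc p ρ) (g h : Γ) (x : X) :
    c.1 (g * h) x = c.1 g (ρ h x) + c.1 h x := c.2 g h x

theorem coc_one (c : Coc p ρ) : c.1 1 = 0 := by
  funext x
  have := coc_mul c 1 1 x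
  simpa using this

theorem coc_inv (c : Coc p ρ) (g : Γ) (x : X) : c.1 g⁻¹ x = - c.1 g (ρ g⁻¹ x) := by
  have := coc_mul c g g⁻¹ x
  rw [mul_inv_cancel, coc_one] at this
  rw [eq_neg_iff_add_eq_zero, add_comm]
  exact this.symm

theorem coc_pow (c : Coc p ρ) (s : Γ) (m : ℕ) (x : X) :
    c.1 (s ^ m) x = ∑ i ∈ Finset.range m, c.1 s ((ρ s ^ i) x) := by
  induction m with
  | zero => simp [coc_one]
  | succ m ih => rw [pow_succ', coc_mul, ih, Finset.sum_range_succ, map_pow, add_comm]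

/-- Evaluation of cocycles on a family of group elements. -/
def cocEval (p : ℕ) (ρ : Γ →* Equiv.Perm X) {ι : Type*} (s : ι → Γ) :
    Coc p ρ →ₗ[ZMod p] (ι → X → ZMod p) where
  toFun c i := c.1 (s i)
  map_add' _ _ := rfl
  map_smul' _ _ := rfl

/-- Evaluation of cocycles at one group element. -/
def cocAt (p : ℕ) (ρ : Γ →* Equiv.Perm X) (s : Γ) : Coc p ρ →ₗ[ZMod p] (X → ZMod p) where
  toFun c := c.1 s
  map_add' _ _ := rfl
  map_smul' _ _ := rfl

theorem cocEval_injective {ι : Type*} (s : ι → Γ) (hs : Subgroup.closure (Set.range s) = ⊤) :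
    Function.Injective (cocEval p ρ s) := by
  rw [injective_iff_map_eq_zero]
  intro c hc
  apply Subtype.ext
  funext g
  have hg : g ∈ Subgroup.closure (Set.range s) := hs ▸ Subgroup.mem_top g
  change c.1 g = 0
  induction hg using Subgroup.closure_induction with
  | mem x hx => obtain ⟨i, rfl⟩ := hx; exact congrFun hc i
  | one => exact coc_one c
  | mul x y _ _ hx hy => funext z; rw [coc_mul, hx, hy]; simp
  | inv x _ hx => funext z; rw [coc_inv, hx]; simp

variable [Fact p.Prime] [Finite X]

theorem coc_finite [hΓ : Group.FG Γ] : FiniteDimensional (ZMod p) (Coc p ρ) := by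
  obtain ⟨S, hS⟩ := Group.fg_def.1 hΓ
  exact FiniteDimensional.of_injective _
    (cocEval_injective (p := p) (ρ := ρ) (fun i : S => i.1) (by simpa using hS))

/-- Upper bound: a cocycle is determined by its values on a generating set. -/
theorem coc_finrank_le (S : Finset Γ) (hS : Subgroup.closure (S : Set Γ) = ⊤) :
    finrank (ZMod p) (Coc p ρ) ≤ S.card * Nat.card X := by
  have := Fintype.ofFinite X
  have h := LinearMap.finrank_le_finrank_of_injective
    (cocEval_injective (p := p) (ρ := ρ) (fun i : S => i.1) (by simpa using hS))
  simpa [Module.finrank_pi_fintype] using h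

/-- A cocycle on a free group can be prescribed on the basis: `v` defines a lift of the action
on `X` to an action on `X × ZMod p`, and the cocycle is its second component. -/
theorem cocEval_free_surjective {p : ℕ} {X ι : Type*} (ρ : FreeGroup ι →* Equiv.Perm X) :
    Function.Surjective (cocEval p ρ (FreeGroup.of : ι → FreeGroup ι)) := by
  intro v
  let P₀ : ι → Equiv.Perm (X × ZMod p) := fun i =>
    { toFun := fun z => (ρ (FreeGroup.of i) z.1, z.2 + v i z.1)
      invFun := fun z => ((ρ (FreeGroup.of i)).symm z.1,
        z.2 - v i ((ρ (FreeGroup.of i)).symm z.1))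
      left_inv := by intro z; simp
      right_inv := by intro z; simp }
  let P : FreeGroup ι →* Equiv.Perm (X × ZMod p) := FreeGroup.lift P₀
  have hP : ∀ g x a, P g (x, a) = (ρ g x, a + (P g (x, 0)).2) := by
    intro g
    induction g using FreeGroup.induction_on with
    | C1 => intro x a; simp
    | of i => intro x a; simp [P, P₀]
    | inv_of i _ =>
      intro x a
      have h : ∀ z, P (FreeGroup.of i)⁻¹ z = (P₀ i).symm z := by
        intro z; simp [P, Equiv.Perm.inv_def]
      change P (FreeGroup.of i)⁻¹ (x, a) = (ρ (FreeGroup.of i)⁻¹ x,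
        a + (P (FreeGroup.of i)⁻¹ (x, 0)).2)
      rw [h, h, map_inv]
      simp [P₀, Equiv.Perm.inv_def, sub_eq_add_neg]
    | mul g h hg hh =>
      intro x a
      have e1 : P (g * h) (x, a) = P g (P h (x, a)) := by rw [map_mul]; rfl
      have e2 : P (g * h) (x, 0) = P g (P h (x, 0)) := by rw [map_mul]; rfl
      rw [e1, e2, hh x a, hg, hh x 0, hg _ (0 + _), map_mul]
      simp [add_comm, add_left_comm]
  refine ⟨⟨fun g x => (P g (x, 0)).2, ?_⟩, ?_⟩
  · intro g h x
    have e2 : P (g * h) (x, 0) = P g (P h (x, 0)) := by rw [map_mul]; rfl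
    change (P (g * h) (x, 0)).2 = (P g (ρ h x, 0)).2 + (P h (x, 0)).2
    rw [e2, hP h x 0, hP g]
    simp [add_comm]
  · funext i x
    change (P (FreeGroup.of i) (x, 0)).2 = v i x
    simp [P, P₀]

theorem coc_free_finrank {n : ℕ} (ρ : FreeGroup (Fin n) →* Equiv.Perm X) :
    finrank (ZMod p) (Coc p ρ) = n * Nat.card X := by
  have := Fintype.ofFinite X
  have h := (LinearEquiv.ofBijective (cocEval p ρ FreeGroup.of)
    ⟨cocEval_injective _ (FreeGroup.closure_range_of _),
      cocEval_free_surjective ρ⟩).finrank_eq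
  simpa [Module.finrank_pi_fintype] using h

/-- Vanishing on a `p ^ e`-th power `s ^ p ^ e` imposes at most `|X| / p ^ e` linear conditions
on cocycles, if this power acts trivially on `X`. -/
theorem relator_rank [Group.FG Γ] (s : Γ) (e : ℕ) (hs : ρ (s ^ p ^ e) = 1) :
    p ^ e * finrank (ZMod p) (LinearMap.range (cocAt p ρ (s ^ p ^ e))) ≤ Nat.card X := by
  have := Fintype.ofFinite X
  let σ : Module.End (ZMod p) (X → ZMod p) := LinearMap.funLeft (ZMod p) (ZMod p) (ρ s)
  have hpow : ∀ (i : ℕ) (v : X → ZMod p) (x : X), (σ ^ i) v x = v ((ρ s ^ i) x) := by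
    intro i
    induction i with
    | zero => intro v x; simp
    | succ i ih =>
      intro v x
      rw [pow_succ, Module.End.mul_apply, ih, pow_succ']
      rfl
  have hσ : σ ^ (p ^ e) = 1 := by
    refine LinearMap.ext fun v => funext fun x => ?_
    rw [hpow, ← map_pow, hs]
    rfl
  have h1 := norm_rank p e σ hσ
  rw [Module.finrank_pi, ← Nat.card_eq_fintype_card] at h1
  refine le_trans (Nat.mul_le_mul_left _ ?_) h1
  -- The evaluation at `s ^ p ^ e` factors through the norm operator of `s`.
  have hfac : cocAt p ρ (s ^ p ^ e) =
      (∑ i ∈ Finset.range (p ^ e), σ ^ i).comp (cocAt p ρ s) := by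
    refine LinearMap.ext fun c => funext fun x => ?_
    have : c.1 (s ^ p ^ e) x = (∑ i ∈ Finset.range (p ^ e), σ ^ i) (c.1 s) x := by
      rw [coc_pow, LinearMap.sum_apply, Finset.sum_apply]
      simp [hpow]
    exact this
  rw [hfac]
  exact Submodule.finrank_mono (LinearMap.range_comp_le_range _ _)

end Cocycles

/-! ### Presentations bound cocycle spaces from below -/

section LowerBound

theorem finrank_le_ker_pi {k V M ι : Type*} [Field k] [AddCommGroup V] [Module k V]
    [AddCommGroup M] [Module k M] [FiniteDimensional k V] [Fintype ι] (f : ι → V →ₗ[k] M) :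
    finrank k V ≤ finrank k (LinearMap.ker (LinearMap.pi f)) +
      ∑ i, finrank k (LinearMap.range (f i)) := by
  have h1 := LinearMap.finrank_range_add_finrank_ker
    (LinearMap.pi fun i => (f i).rangeRestrict)
  have h2 := Submodule.finrank_le
    (LinearMap.range (LinearMap.pi fun i => (f i).rangeRestrict))
  rw [Module.finrank_pi_fintype] at h2
  have h3 : LinearMap.ker (LinearMap.pi fun i => (f i).rangeRestrict) =
      LinearMap.ker (LinearMap.pi f) := by
    simp [LinearMap.ker_pi]
  rw [h3] at h1
  omega

theorem nuP_spec (p : ℕ) {α : Type*} (r : FreeGroup α) :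
    ∃ s : FreeGroup α, r = s ^ (p ^ nuP p r) := by
  by_cases h : BddAbove {k : ℕ | ∃ s : FreeGroup α, r = s ^ (p ^ k)}
  · have hne : {k : ℕ | ∃ s : FreeGroup α, r = s ^ (p ^ k)}.Nonempty := ⟨0, r, by simp⟩
    exact Nat.sSup_mem hne h
  · -- For `r = 1` the set is unbounded and its supremum in `ℕ` is `0`.
    have : nuP p r = 0 := Nat.sSup_of_not_bddAbove h
    exact ⟨r, by simp [this]⟩

/-- The elements acting trivially on `X` at which a cocycle vanishes form a normal subgroup. -/
theorem coc_vanish {p : ℕ} {Γ X : Type*} [Group Γ] {ρ : Γ →* Equiv.Perm X} (R : Set Γ)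
    (hR : ∀ r ∈ R, ρ r = 1) (c : Coc p ρ) (hc : ∀ r ∈ R, c.1 r = 0) :
    ∀ g ∈ Subgroup.normalClosure R, c.1 g = 0 := by
  intro g hg
  rw [Subgroup.normalClosure] at hg
  induction hg using Subgroup.closure_induction with
  | mem x hx =>
    obtain ⟨r, hr, hx⟩ := Group.mem_conjugatesOfSet_iff.1 hx
    obtain ⟨a, rfl⟩ := isConj_iff.1 hx
    funext z
    rw [coc_mul, coc_mul, hc r hr, hR r hr, coc_inv]
    simp
  | one => exact coc_one c
  | mul x y _ _ hx hy => funext z; rw [coc_mul, hx, hy]; simp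
  | inv x _ hx => funext z; rw [coc_inv, hx]; simp

/-- A presentation bounds the dimension of the cocycle space from below: cocycles of the free
group form a space of dimension `n |X|`, and each relator `r` imposes at most
`|X| / p ^ ν_p(r)` conditions. -/
theorem coc_lower {p : ℕ} [Fact p.Prime] {H X : Type*} [Group H] [Group.FG H] [Finite X]
    (ρ : H →* Equiv.Perm X) {n : ℕ} (R : Set (FreeGroup (Fin n)))
    (φ : FreeGroup (Fin n) →* H) (hφ : Function.Surjective φ)
    (hker : φ.ker = Subgroup.normalClosure R)
    (hsum : Summable (fun r : R => ((p : ℝ) ^ (nuP p r.1))⁻¹)) :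
    ((n : ℝ) - ∑' r : R, ((p : ℝ) ^ (nuP p r.1))⁻¹) * Nat.card X ≤
      finrank (ZMod p) (Coc p ρ) := by
  have hp0 : (0 : ℝ) < p := by exact_mod_cast (Fact.out : p.Prime).pos
  set ρ' : FreeGroup (Fin n) →* Equiv.Perm X := ρ.comp φ with hρ'
  have hfin : FiniteDimensional (ZMod p) (Coc p ρ') := coc_finite
  have hfin' : FiniteDimensional (ZMod p) (Coc p ρ) := coc_finite
  have hφR : ∀ r ∈ R, φ r = 1 := by
    intro r hr
    have : r ∈ φ.ker := hker ▸ Subgroup.subset_normalClosure hr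
    exact this
  have hρR : ∀ r ∈ R, ρ' r = 1 := by
    intro r hr
    simp [hρ', hφR r hr]
  have hrank : ∀ r ∈ R,
      p ^ nuP p r * finrank (ZMod p) (LinearMap.range (cocAt p ρ' r)) ≤ Nat.card X := by
    intro r hr
    obtain ⟨s, hs⟩ := nuP_spec p r
    have h := relator_rank (p := p) (ρ := ρ') s (nuP p r) (by rw [← hs]; exact hρR r hr)
    rwa [← hs] at h
  -- All but finitely many relators are such high powers that they impose no condition.
  have hev : ∀ᶠ r : R in Filter.cofinite,
      ((p : ℝ) ^ (nuP p r.1))⁻¹ < ((Nat.card X : ℝ) + 1)⁻¹ :=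
    hsum.tendsto_cofinite_zero.eventually_lt_const (by positivity)
  rw [Filter.eventually_cofinite] at hev
  set T : Finset R := hev.toFinset with hT
  have hTc : ∀ r : R, r ∉ T → cocAt p ρ' r.1 = 0 := by
    intro r hr
    have h1 : ((p : ℝ) ^ (nuP p r.1))⁻¹ < ((Nat.card X : ℝ) + 1)⁻¹ := by
      by_contra h
      exact hr (by rw [hT, Set.Finite.mem_toFinset]; exact h)
    have h2 : Nat.card X + 1 < p ^ nuP p r.1 := by
      have := (inv_lt_inv₀ (by positivity) (by positivity)).1 h1
      exact_mod_cast this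
    have h3 := hrank r.1 r.2
    have h4 : finrank (ZMod p) (LinearMap.range (cocAt p ρ' r.1)) = 0 := by
      by_contra h
      have := Nat.le_mul_of_pos_right (p ^ nuP p r.1) (Nat.pos_of_ne_zero h)
      omega
    exact LinearMap.range_eq_bot.1 (Submodule.finrank_eq_zero.1 h4)
  let f : T → Coc p ρ' →ₗ[ZMod p] (X → ZMod p) := fun r => cocAt p ρ' r.1.1
  have hdim := finrank_le_ker_pi f
  have hvan : ∀ c ∈ LinearMap.ker (LinearMap.pi f), ∀ g ∈ φ.ker, c.1 g = 0 := by
    intro c hc g hg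
    refine coc_vanish R hρR c (fun r hr => ?_) g (hker ▸ hg)
    by_cases h : (⟨r, hr⟩ : R) ∈ T
    · exact congrFun (LinearMap.mem_ker.1 hc) ⟨⟨r, hr⟩, h⟩
    · exact LinearMap.congr_fun (hTc _ h) c
  have hdesc : ∀ c ∈ LinearMap.ker (LinearMap.pi f), ∀ g h, φ g = φ h → c.1 g = c.1 h := by
    intro c hc g h hgh
    have hk : h⁻¹ * g ∈ φ.ker := by simp [MonoidHom.mem_ker, hgh]
    have h2 : ρ' (h⁻¹ * g) = 1 := by
      simp only [hρ', MonoidHom.comp_apply, MonoidHom.mem_ker.1 hk, map_one]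
    funext x
    have h1 := coc_mul c h (h⁻¹ * g) x
    rw [hvan c hc _ hk, h2, mul_inv_cancel_left] at h1
    simpa using h1
  let σ : H → FreeGroup (Fin n) := Function.surjInv hφ
  have hσ : ∀ h, φ (σ h) = h := Function.surjInv_eq hφ
  let Φ : LinearMap.ker (LinearMap.pi f) →ₗ[ZMod p] Coc p ρ :=
    { toFun := fun c => ⟨fun h => c.1.1 (σ h), by
        intro g h x
        beta_reduce
        rw [hdesc c.1 c.2 (σ (g * h)) (σ g * σ h) (by simp [hσ]), coc_mul]
        simp [hρ', hσ]⟩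
      map_add' := fun _ _ => rfl
      map_smul' := fun _ _ => rfl }
  have hΦ : Function.Injective Φ := by
    intro c d hcd
    apply Subtype.ext
    apply Subtype.ext
    funext g
    have h := congrFun (congrArg Subtype.val hcd) (φ g)
    have h' : c.1.1 (σ (φ g)) = d.1.1 (σ (φ g)) := h
    rwa [hdesc c.1 c.2 (σ (φ g)) g (hσ _), hdesc d.1 d.2 (σ (φ g)) g (hσ _)] at h'
  have hle := LinearMap.finrank_le_finrank_of_injective hΦ
  rw [coc_free_finrank] at hdim
  have hsumle : (∑ i : T, (finrank (ZMod p) (LinearMap.range (f i)) : ℝ)) ≤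
      (∑' r : R, ((p : ℝ) ^ (nuP p r.1))⁻¹) * Nat.card X := by
    calc (∑ i : T, (finrank (ZMod p) (LinearMap.range (f i)) : ℝ))
        ≤ ∑ i : T, ((p : ℝ) ^ (nuP p i.1.1))⁻¹ * Nat.card X := by
          refine Finset.sum_le_sum fun i _ => ?_
          rw [inv_mul_eq_div, le_div_iff₀ (by positivity), mul_comm]
          exact_mod_cast hrank i.1.1 i.1.2
      _ = (∑ r ∈ T, ((p : ℝ) ^ (nuP p r.1))⁻¹) * Nat.card X := by
          rw [Finset.sum_mul]
          exact Finset.sum_coe_sort T fun r => ((p : ℝ) ^ (nuP p r.1))⁻¹ * (Nat.card X : ℝ)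
      _ ≤ _ := by
          refine mul_le_mul_of_nonneg_right ?_ (by positivity)
          exact hsum.sum_le_tsum T fun r _ => by positivity
  have hdim' : (n : ℝ) * Nat.card X ≤ finrank (ZMod p) (Coc p ρ) +
      ∑ i : T, (finrank (ZMod p) (LinearMap.range (f i)) : ℝ) := by
    have := hdim.trans (Nat.add_le_add_right hle _)
    exact_mod_cast this
  rw [sub_mul]
  linarith

end LowerBound

/-! ### Shapiro's lemma for the cosets of a subgroup -/

section Shapiro

/-- Homomorphisms from `K` to `ZMod p`, as a subspace of all functions. -/
def HomZ (p : ℕ) (K : Type*) [Group K] : Submodule (ZMod p) (K → ZMod p) where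
  carrier := {θ | ∀ g h, θ (g * h) = θ g + θ h}
  zero_mem' := by intro g h; simp
  add_mem' := by
    intro a b ha hb g h
    simp only [Pi.add_apply, ha g h, hb g h]
    ring
  smul_mem' := by
    intro t a ha g h
    simp only [Pi.smul_apply, ha g h, smul_add]

theorem homZ_finrank_congr (p : ℕ) {K K' : Type*} [Group K] [Group K'] (e : K ≃* K') :
    finrank (ZMod p) (HomZ p K) = finrank (ZMod p) (HomZ p K') := by
  let E : HomZ p K ≃ₗ[ZMod p] HomZ p K' :=
    { toFun := fun θ => ⟨fun k => θ.1 (e.symm k), fun g h => by beta_reduce; rw [map_mul]; exact θ.2 _ _⟩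
      invFun := fun θ => ⟨fun k => θ.1 (e k), fun g h => by beta_reduce; rw [map_mul]; exact θ.2 _ _⟩
      map_add' := fun _ _ => rfl
      map_smul' := fun _ _ => rfl
      left_inv := fun θ => by apply Subtype.ext; funext k; simp
      right_inv := fun θ => by apply Subtype.ext; funext k; simp }
  exact E.finrank_eq

variable {p : ℕ} {H : Type*} [Group H] (K : Subgroup H)

/-- The action of `H` on the cosets of `K`. -/
abbrev cosetPerm : H →* Equiv.Perm (H ⧸ K) := MulAction.toPermHom H (H ⧸ K)

/-- A cocycle on the coset space is determined by its restriction to the stabiliser `K` of the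
base point and its values along a transversal; an extra constant `a` makes the latter free. -/
noncomputable def shapiroMap (p : ℕ) :
    (Coc p (cosetPerm K) × ZMod p) →ₗ[ZMod p] (HomZ p K × (H ⧸ K → ZMod p)) where
  toFun z := (⟨fun k => z.1.1 k.1 ((1 : H) : H ⧸ K), by
      intro g h
      have hh : (cosetPerm K) h.1 ((1 : H) : H ⧸ K) = ((1 : H) : H ⧸ K) := by
        change ((h.1 * 1 : H) : H ⧸ K) = _
        rw [mul_one]
        exact QuotientGroup.eq.2 (by simp [h.2])
      have := coc_mul z.1 g.1 h.1 ((1 : H) : H ⧸ K)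
      rw [hh] at this
      exact this⟩, fun x => z.1.1 x.out ((1 : H) : H ⧸ K) + z.2)
  map_add' z w := by
    refine Prod.ext (Subtype.ext (funext fun k => rfl)) (funext fun x => ?_)
    change (z.1.1 _ _ + w.1.1 _ _) + (z.2 + w.2) = (z.1.1 _ _ + z.2) + (w.1.1 _ _ + w.2)
    ring
  map_smul' t z := by
    refine Prod.ext (Subtype.ext (funext fun k => rfl)) (funext fun x => ?_)
    exact (smul_add t _ _).symm

theorem smul_one_coset (g : H) : (cosetPerm K) g ((1 : H) : H ⧸ K) = (g : H ⧸ K) := by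
  change ((g * 1 : H) : H ⧸ K) = _
  rw [mul_one]

theorem out_diff_mem (g : H) (x : H ⧸ K) :
    ((cosetPerm K) g x).out⁻¹ * g * x.out ∈ K := by
  have h1 : ((((cosetPerm K) g x).out : H) : H ⧸ K) = (cosetPerm K) g x := Quotient.out_eq' _
  have h2 : (cosetPerm K) g x = ((g * x.out : H) : H ⧸ K) := by
    conv_lhs => rw [← Quotient.out_eq' x]
    rfl
  rw [mul_assoc, ← QuotientGroup.eq, h1, h2]

theorem shapiro_injective : Function.Injective (shapiroMap K p) := by
  rw [injective_iff_map_eq_zero]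
  rintro ⟨c, a⟩ hz
  have h1 : ∀ k ∈ K, c.1 k ((1 : H) : H ⧸ K) = 0 := fun k hk =>
    congrFun (congrArg Subtype.val (congrArg Prod.fst hz)) ⟨k, hk⟩
  have h2 : ∀ x : H ⧸ K, c.1 x.out ((1 : H) : H ⧸ K) + a = 0 := fun x =>
    congrFun (congrArg Prod.snd hz) x
  have ha : a = 0 := by
    have hm : (((1 : H) : H ⧸ K)).out ∈ K := by
      have := QuotientGroup.eq.1 (Quotient.out_eq' ((1 : H) : H ⧸ K)).symm
      simpa using this
    have := h2 ((1 : H) : H ⧸ K)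
    rwa [h1 _ hm, zero_add] at this
  have h3 : ∀ x : H ⧸ K, c.1 x.out ((1 : H) : H ⧸ K) = 0 := fun x => by
    simpa [ha] using h2 x
  -- `g t(x) = t(g x) k` with `k ∈ K`, for the transversal `t`.
  have h4 : ∀ g : H, c.1 g ((1 : H) : H ⧸ K) = 0 := by
    intro g
    have hk : ((g : H ⧸ K)).out⁻¹ * g ∈ K :=
      QuotientGroup.eq.1 (Quotient.out_eq' (g : H ⧸ K))
    have := coc_mul c (g : H ⧸ K).out (((g : H ⧸ K)).out⁻¹ * g) ((1 : H) : H ⧸ K)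
    rw [mul_inv_cancel_left, h1 _ hk, smul_one_coset, add_zero] at this
    rw [this, (QuotientGroup.eq (s := K) (a := (g : H ⧸ K).out⁻¹ * g) (b := 1)).2
      (by simpa using K.inv_mem hk)]
    exact h3 _
  refine Prod.ext (Subtype.ext ?_) ha
  funext g x
  have h5 := coc_mul c g x.out ((1 : H) : H ⧸ K)
  have hx : ((x.out : H) : H ⧸ K) = x := Quotient.out_eq' x
  rw [h4, h4, smul_one_coset, hx, add_zero] at h5
  exact h5.symm

/-- A homomorphism `θ` on `K` and a function `b` on the cosets give the cocycle
`c g x = b (g x) - b x + θ (t (g x)⁻¹ g t x)`, where `t` is the transversal. -/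
theorem shapiro_surjective : Function.Surjective (shapiroMap K p) := by
  rintro ⟨θ, b⟩
  have θm : ∀ k l : K, θ.1 (k * l) = θ.1 k + θ.1 l := θ.2
  let t : H ⧸ K → H := fun x => x.out
  let κ : H → H ⧸ K → K := fun g x => ⟨_, out_diff_mem K g x⟩
  let x₀ : H ⧸ K := ((1 : H) : H ⧸ K)
  have ht₀ : t x₀ ∈ K := by
    have := QuotientGroup.eq.1 (Quotient.out_eq' x₀).symm
    simpa using this
  let k₀ : K := ⟨t x₀, ht₀⟩
  let c : Coc p (cosetPerm K) :=
    ⟨fun g x => b (cosetPerm K g x) - b x + θ.1 (κ g x), by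
      intro g h x
      have hk : κ (g * h) x = κ g (cosetPerm K h x) * κ h x := by
        apply Subtype.ext
        simp only [κ, map_mul, Equiv.Perm.mul_apply, Subgroup.coe_mul]
        group
      change b (cosetPerm K (g * h) x) - b x + θ.1 (κ (g * h) x) =
        (b (cosetPerm K g (cosetPerm K h x)) - b (cosetPerm K h x) +
          θ.1 (κ g (cosetPerm K h x))) + (b (cosetPerm K h x) - b x + θ.1 (κ h x))
      rw [hk, θm, map_mul, Equiv.Perm.mul_apply]
      ring⟩
  refine ⟨(c, b x₀ - θ.1 k₀), Prod.ext (Subtype.ext (funext fun k => ?_)) (funext fun x => ?_)⟩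
  · change b (cosetPerm K k.1 x₀) - b x₀ + θ.1 (κ k.1 x₀) = θ.1 k
    have hk : cosetPerm K k.1 x₀ = x₀ := by
      rw [smul_one_coset]
      exact (QuotientGroup.eq.2 (by simp [k.2])).symm
    have hκ : k₀ * κ k.1 x₀ = k * k₀ := by
      apply Subtype.ext
      change t x₀ * ((t (cosetPerm K k.1 x₀))⁻¹ * k.1 * t x₀) = k.1 * t x₀
      rw [hk]
      group
    have := congrArg θ.1 hκ
    rw [θm, θm] at this
    rw [hk, sub_self, zero_add]
    linear_combination this
  · change b (cosetPerm K (t x) x₀) - b x₀ + θ.1 (κ (t x) x₀) + (b x₀ - θ.1 k₀) = b x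
    have hx : cosetPerm K (t x) x₀ = x := by
      rw [smul_one_coset]
      exact Quotient.out_eq' x
    have hκ : κ (t x) x₀ = k₀ := by
      apply Subtype.ext
      change (t (cosetPerm K (t x) x₀))⁻¹ * t x * t x₀ = t x₀
      rw [hx]
      group
    rw [hx, hκ]
    ring

/-- Shapiro's lemma in dimensions: `dim Z¹(H, Fun(H/K)) + 1 = dim Hom(K, ZMod p) + |H : K|`. -/
theorem shapiro_finrank [Fact p.Prime] [Group.FG H] [Finite (H ⧸ K)] :
    finrank (ZMod p) (Coc p (cosetPerm K)) + 1 = finrank (ZMod p) (HomZ p K) + K.index := by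
  have := Fintype.ofFinite (H ⧸ K)
  have hfin : FiniteDimensional (ZMod p) (Coc p (cosetPerm K)) := coc_finite
  let E := LinearEquiv.ofBijective (shapiroMap K p) ⟨shapiro_injective K, shapiro_surjective K⟩
  have hfin2 : FiniteDimensional (ZMod p) (HomZ p K) :=
    FiniteDimensional.of_injective (E.symm.toLinearMap.comp (LinearMap.inl _ _ _))
      (E.symm.injective.comp LinearMap.inl_injective)
  have h := E.finrank_eq
  rw [Module.finrank_prod, Module.finrank_prod, Module.finrank_self, Module.finrank_pi,
    ← Nat.card_eq_fintype_card] at h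
  exact h

end Shapiro

/-! ### Comparison of presentations and ranks -/

section Comparison

/-- A finite index subgroup `L` and a presentation of a finite index subgroup `H` are compared
through `H ⊓ L`, whose first cohomology bounds both sides. -/
theorem presentation_le {G : Type*} [Group G] [Group.FG G] {p : ℕ} [Fact p.Prime]
    (H L : Subgroup G) (hH : H.index ≠ 0) (hL : L.index ≠ 0)
    (S : Finset L) (hS : Subgroup.closure (S : Set L) = ⊤)
    {n : ℕ} (R : Set (FreeGroup (Fin n))) (φ : FreeGroup (Fin n) →* H)
    (hφ : Function.Surjective φ) (hker : φ.ker = Subgroup.normalClosure R)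
    (hsum : Summable (fun r : R => ((p : ℝ) ^ (nuP p r.1))⁻¹)) :
    (n : ℝ) - ∑' r : R, ((p : ℝ) ^ (nuP p r.1))⁻¹ ≤
      1 + H.index * (((S.card : ℝ) - 1) / L.index) := by
  have hHf : H.FiniteIndex := ⟨hH⟩
  have hLf : L.FiniteIndex := ⟨hL⟩
  set K : Subgroup G := H ⊓ L with hK
  have hHFG : Group.FG H := Subgroup.fg_of_index_ne_zero H
  have hLFG : Group.FG L := Subgroup.fg_of_index_ne_zero L
  have hu := Subgroup.relIndex_mul_index (inf_le_left : K ≤ H)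
  have hw := Subgroup.relIndex_mul_index (inf_le_right : K ≤ L)
  have hKi : K.index ≠ 0 := (inferInstance : (H ⊓ L).FiniteIndex).index_ne_zero
  have hu0 : K.relIndex H ≠ 0 := fun h => hKi (by rw [← hu, h, zero_mul])
  have hw0 : K.relIndex L ≠ 0 := fun h => hKi (by rw [← hw, h, zero_mul])
  have hfu : Finite (H ⧸ K.subgroupOf H) := Nat.finite_of_card_ne_zero hu0
  have hfw : Finite (L ⧸ K.subgroupOf L) := Nat.finite_of_card_ne_zero hw0
  have h1 := coc_lower (cosetPerm (K.subgroupOf H)) R φ hφ hker hsum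
  have h2 := shapiro_finrank (p := p) (K.subgroupOf H)
  have h3 := coc_finrank_le (p := p) (ρ := cosetPerm (K.subgroupOf L)) S hS
  have h4 := shapiro_finrank (p := p) (K.subgroupOf L)
  have e1 := homZ_finrank_congr p (Subgroup.subgroupOfEquivOfLe (inf_le_left : K ≤ H))
  have e2 := homZ_finrank_congr p (Subgroup.subgroupOfEquivOfLe (inf_le_right : K ≤ L))
  rw [e1] at h2
  rw [e2] at h4
  change _ = _ + K.relIndex H at h2
  change _ = _ + K.relIndex L at h4
  change _ * ((K.relIndex H : ℕ) : ℝ) ≤ _ at h1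
  change _ ≤ S.card * K.relIndex L at h3
  set D := (n : ℝ) - ∑' r : R, ((p : ℝ) ^ (nuP p r.1))⁻¹
  set u := K.relIndex H
  set w := K.relIndex L
  have h2' := congrArg (Nat.cast (R := ℝ)) h2
  have h4' := congrArg (Nat.cast (R := ℝ)) h4
  have h3' : ((finrank (ZMod p) (Coc p (cosetPerm (K.subgroupOf L))) : ℕ) : ℝ) ≤
      S.card * w := by exact_mod_cast h3
  push_cast at h2' h4'
  have key : (D - 1) * u ≤ ((S.card : ℝ) - 1) * w := by linarith
  have hidx : (u : ℝ) * H.index = w * L.index := by exact_mod_cast hu.trans hw.symm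
  have hHpos : (0 : ℝ) < H.index := by exact_mod_cast Nat.pos_of_ne_zero hH
  have hLpos : (0 : ℝ) < L.index := by exact_mod_cast Nat.pos_of_ne_zero hL
  have hupos : (0 : ℝ) < u := by exact_mod_cast Nat.pos_of_ne_zero hu0
  have hwu : (w : ℝ) = u * H.index / L.index := by rw [hidx]; field_simp
  have : (D - 1) * u ≤ (H.index * (((S.card : ℝ) - 1) / L.index)) * u := by
    calc _ ≤ _ := key
      _ = _ := by rw [hwu]; ring
  linarith [le_of_mul_le_mul_right this hupos]

/-- A finite group has a presentation with finitely many relators, as the kernel of a map from a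
free group of finite rank onto it is finitely generated by Schreier's lemma. -/
theorem exists_finite_presentation (H : Type*) [Group H] [Finite H] :
    ∃ (n : ℕ) (R : Set (FreeGroup (Fin n))) (φ : FreeGroup (Fin n) →* H), R.Finite ∧
      Function.Surjective φ ∧ φ.ker = Subgroup.normalClosure R := by
  have e := Finite.equivFin H
  let φ : FreeGroup (Fin (Nat.card H)) →* H := FreeGroup.lift e.symm
  have hφ : Function.Surjective φ := fun h => ⟨FreeGroup.of (e h), by simp [φ]⟩
  have hidx : φ.ker.FiniteIndex := ⟨by
    rw [Subgroup.index_ker]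
    exact Nat.card_pos.ne'⟩
  have hfg : Group.FG φ.ker := Subgroup.fg_of_index_ne_zero φ.ker
  obtain ⟨S, hS⟩ := (Group.fg_iff_subgroup_fg φ.ker).1 hfg
  refine ⟨_, S, φ, S.finite_toSet, hφ, le_antisymm ?_ ?_⟩
  · rw [← hS]
    exact Subgroup.closure_le_normalClosure
  · refine Subgroup.normalClosure_le_normal ?_
    rw [← hS]
    exact Subgroup.subset_closure

/-- The bound of `presentation_le` passes to the supremum. If there is no admissible presentation,
the supremum is `0` by convention; then `H` is infinite, and the bound is at least `1`. -/
theorem defP_le {G : Type*} [Group G] [Group.FG G] {p : ℕ} [Fact p.Prime]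
    (H L : Subgroup G) (hH : H.index ≠ 0) (hL : L.index ≠ 0) :
    defP p H ≤ 1 + H.index * (((grpRank L : ℝ) - 1) / L.index) := by
  have hLf : L.FiniteIndex := ⟨hL⟩
  have hLFG : Group.FG L := Subgroup.fg_of_index_ne_zero L
  obtain ⟨S, hcard, hS⟩ : ∃ S : Finset L, S.card = grpRank L ∧
      Subgroup.closure (S : Set L) = ⊤ := by
    obtain ⟨S, hS⟩ := Group.fg_def.1 hLFG
    exact Nat.sInf_mem (s := {n : ℕ | ∃ S : Finset L, S.card = n ∧
      Subgroup.closure (S : Set L) = ⊤}) ⟨S.card, S, rfl, hS⟩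
  have hbound : ∀ x ∈ {x : ℝ | ∃ (n : ℕ) (R : Set (FreeGroup (Fin n)))
      (φ : FreeGroup (Fin n) →* H), Function.Surjective φ ∧
      φ.ker = Subgroup.normalClosure R ∧
      Summable (fun r : R => ((p : ℝ) ^ (nuP p r.1))⁻¹) ∧
      x = (n : ℝ) - ∑' r : R, ((p : ℝ) ^ (nuP p r.1))⁻¹},
      x ≤ 1 + H.index * (((grpRank L : ℝ) - 1) / L.index) := by
    rintro x ⟨n, R, φ, hφ, hker, hsum, rfl⟩
    rw [← hcard]
    exact presentation_le H L hH hL S hS R φ hφ hker hsum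
  by_cases h0 : grpRank L = 0
  · -- `L` is trivial, so `G` is finite and the set of presentations of `H` is not empty.
    have hLbot : Subsingleton L := by
      rw [h0, Finset.card_eq_zero] at hcard
      rw [hcard, Finset.coe_empty, Subgroup.closure_empty] at hS
      exact Subgroup.subsingleton_iff.1 (subsingleton_of_bot_eq_top hS)
    have hGcard : Nat.card G ≠ 0 := by
      rw [← L.card_mul_index, Nat.card_eq_one_iff_unique.2 ⟨hLbot, ⟨1⟩⟩, one_mul]
      exact hL
    have hGfin : Finite G := Nat.finite_of_card_ne_zero hGcard
    obtain ⟨n, R, φ, hR, hφ, hker⟩ := exists_finite_presentation H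
    have := hR.to_subtype
    exact csSup_le ⟨_, n, R, φ, hφ, hker, Summable.of_finite, rfl⟩ hbound
  · -- The supremum of an empty set is `0`, which is also below the bound.
    refine Real.sSup_le hbound ?_
    have h1 : (1 : ℝ) ≤ grpRank L := by exact_mod_cast Nat.one_le_iff_ne_zero.2 h0
    have : (0 : ℝ) ≤ (grpRank L : ℝ) - 1 := by linarith
    positivity

end Comparison

/-- the `p`-deficiency gradient is at most the rank gradient. -/
theorem statement3 {G : Type*} [Group G] (hfg : Group.FG G) (p : ℕ) (hp : p.Prime) :
    DGp p G ≤ RG G := by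
  have : Fact p.Prime := ⟨hp⟩
  refine csSup_le ⟨_, ⊤, inferInstance, by simp, rfl⟩ ?_
  rintro _ ⟨H, -, hH, rfl⟩
  refine le_csInf ⟨_, ⊤, by simp, rfl⟩ ?_
  rintro _ ⟨L, hL, rfl⟩
  have hHpos : (0 : ℝ) < H.index := by exact_mod_cast Nat.pos_of_ne_zero hH
  rw [div_le_iff₀ hHpos, mul_comm]
  linarith [defP_le (p := p) H L hH hL]

end ResDef
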